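/- arXiv:1412.0263 — 3 statements merged into one kernel-verified Lean document; each statement's English description precedes it below -/
import Mathlib

section
/- Let f₊ : ℝ → ℝ be three times continuously differentiable with a nondegenerate maximum at x_M > 0, i.e., f₊'(x_M) = 0 and f₊''(x_M) < 0, and let g : ℝ³ → ℝ be continuously differentiable (arguments written g(x, y, λ)) with g_x(x_M, f₊(x_M), x_M) > 0. Then for every δ > 0 there exists ε₀ > 0 such that for all ε ∈ (0, ε₀) there exists λ_H with |λ_H - x_M| < δ such that the linearization J = [[f₊'(λ_H), -1], [ε·g_x(λ_H, f₊(λ_H), λ_H), ε·g_y(λ_H, f₊(λ_H), λ_H)]] of the system ẋ = -y + f₊(x), ẏ = ε g(x, y, λ) at the equilibrium (λ_H, f₊(λ_H)) satisfies trace(J) = f₊'(λ_H) + ε·g_y(λ_H, f₊(λ_H), λ_H) = 0 and det(J) = ε·(f₊'(λ_H)·g_y(λ_H, f₊(λ_H), λ_H) + g_x(λ_H, f₊(λ_H), λ_H)) > 0; in particular J has a pair of purely imaginary, nonzero complex eigenvalues (a Hopf bifurcation point near the smooth fold x_M). -/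
/-!
The trace of the linearization is `f₊'(l) + ε g_y`. At `ε = 0` it is `f₊'(l)`, which changes sign
transversally at `x_M`, so for small `ε` the intermediate value theorem still yields a zero
`λ_H` near `x_M`. The determinant is `ε (f₊' g_y + g_x)`, whose bracket is close to
`g_x(x_M, f₊(x_M), x_M) > 0` there. A real `2 × 2` matrix of trace zero and positive determinant has
eigenvalues `± i √det`.
-/

open Filter Topology

section TraceZero

variable {n : Type*} [Fintype n] [DecidableEq n]

theorem isRoot_charpoly_iff_sq_eq_neg_det {R : Type*} [CommRing R] [Nontrivial R]
    {M : Matrix n n R} (hn : Fintype.card n = 2) (htr : M.trace = 0) {z : R} :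
    M.charpoly.IsRoot z ↔ z ^ 2 = -M.det := by
  simp [Polynomial.IsRoot, M.charpoly_of_card_eq_two hn, htr, add_eq_zero_iff_eq_neg]

theorem exists_isRoot_charpoly_I_mul {M : Matrix n n ℝ} (hn : Fintype.card n = 2)
    (htr : M.trace = 0) (hdet : 0 < M.det) :
    ∃ ω : ℝ, ω ≠ 0 ∧
      (M.map Complex.ofReal).charpoly.IsRoot (Complex.I * ω) ∧
      (M.map Complex.ofReal).charpoly.IsRoot (-(Complex.I * ω)) := by
  have htr' : (M.map Complex.ofReal).trace = 0 := by
    rw [← Complex.ofReal_zero, ← htr]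
    exact (AddMonoidHom.map_trace Complex.ofRealHom M).symm
  have hdet' : (M.map Complex.ofReal).det = (M.det : ℂ) := (Complex.ofRealHom.map_det M).symm
  have hsq : (Complex.I * (√M.det : ℝ)) ^ 2 = -(M.map Complex.ofReal).det := by
    rw [mul_pow, Complex.I_sq, ← Complex.ofReal_pow, Real.sq_sqrt hdet.le, hdet', neg_one_mul]
  refine ⟨√M.det, (Real.sqrt_pos.2 hdet).ne', ?_, ?_⟩
  · exact (isRoot_charpoly_iff_sq_eq_neg_det hn htr').2 hsq
  · exact (isRoot_charpoly_iff_sq_eq_neg_det hn htr').2 ((neg_sq _).trans hsq)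

end TraceZero

theorem exists_Icc_subset_pos_neg_of_deriv_neg {f : ℝ → ℝ} {x₀ : ℝ} {U : Set ℝ}
    (hU : U ∈ 𝓝 x₀) (hf₀ : f x₀ = 0) (hf' : deriv f x₀ < 0) :
    ∃ a b, a ≤ b ∧ Set.Icc a b ⊆ U ∧ 0 < f a ∧ f b < 0 := by
  have hsign := eventually_nhdsWithin_sign_eq_of_deriv_neg hf' hf₀
  obtain ⟨r, hr, hball⟩ := (nhds_basis_Icc_pos x₀).mem_iff.1 (inter_mem hU hsign)
  have hab : x₀ - r ≤ x₀ + r := by linarith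
  refine ⟨x₀ - r, x₀ + r, hab, fun x hx ↦ (hball hx).1, ?_, ?_⟩
  · have hleft : SignType.sign (f (x₀ - r)) = SignType.sign (x₀ - (x₀ - r)) :=
      (hball (Set.left_mem_Icc.2 hab)).2
    rwa [sub_sub_cancel, sign_pos hr, sign_eq_one_iff] at hleft
  · have hright : SignType.sign (f (x₀ + r)) = SignType.sign (x₀ - (x₀ + r)) :=
      (hball (Set.right_mem_Icc.2 hab)).2
    rwa [sub_add_cancel_left, sign_neg (neg_lt_zero.2 hr), sign_eq_neg_one_iff] at hright

theorem eventually_exists_zero_of_tendsto_of_deriv_neg {ι : Type*} {p : Filter ι}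
    {F : ι → ℝ → ℝ} {f : ℝ → ℝ} {x₀ : ℝ} {U : Set ℝ} (hU : U ∈ 𝓝 x₀)
    (hf₀ : f x₀ = 0) (hf' : deriv f x₀ < 0) (hcont : ∀ᶠ i in p, ContinuousOn (F i) U)
    (hlim : ∀ x ∈ U, Tendsto (fun i ↦ F i x) p (𝓝 (f x))) :
    ∀ᶠ i in p, ∃ x ∈ U, F i x = 0 := by
  obtain ⟨a, b, hab, hsub, ha, hb⟩ := exists_Icc_subset_pos_neg_of_deriv_neg hU hf₀ hf'
  have hpos := (hlim a (hsub (Set.left_mem_Icc.2 hab))).eventually_const_lt ha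
  have hneg := (hlim b (hsub (Set.right_mem_Icc.2 hab))).eventually_lt_const hb
  filter_upwards [hcont, hpos, hneg] with i hi hia hib
  obtain ⟨x, hx, hx₀⟩ := intermediate_value_Icc' hab (hi.mono hsub) ⟨hib.le, hia.le⟩
  exact ⟨x, hsub hx, hx₀⟩

theorem eventually_continuousAt_fderiv {𝕜 E F : Type*} [NontriviallyNormedField 𝕜]
    [NormedAddCommGroup E] [NormedSpace 𝕜 E] [NormedAddCommGroup F] [NormedSpace 𝕜 F]
    {f : E → F} {x : E} (hf : ContDiffAt 𝕜 1 f x) :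
    ∀ᶠ y in 𝓝 x, ContinuousAt (fderiv 𝕜 f) y :=
  (hf.eventually (by simp)).mono fun _ hy ↦ hy.continuousAt_fderiv one_ne_zero

theorem eventually_continuousAt_deriv {𝕜 F : Type*} [NontriviallyNormedField 𝕜]
    [NormedAddCommGroup F] [NormedSpace 𝕜 F] {f : 𝕜 → F} {x : 𝕜} (hf : ContDiffAt 𝕜 1 f x) :
    ∀ᶠ y in 𝓝 x, ContinuousAt (deriv f) y :=
  (eventually_continuousAt_fderiv hf).mono fun _ hy ↦ hy.clm_apply continuousAt_const

/-- The Jacobian matrix of the slow-fast system `ẋ = -y + f x`, `ẏ = ε g(x, y, l)` at the point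
`(l, f l)` of its critical manifold. -/
noncomputable def slowFastJacobian (f : ℝ → ℝ) (g : ℝ × ℝ × ℝ → ℝ) (ε l : ℝ) :
    Matrix (Fin 2) (Fin 2) ℝ :=
  !![deriv f l, -1;
    ε * fderiv ℝ g (l, f l, l) (1, 0, 0), ε * fderiv ℝ g (l, f l, l) (0, 1, 0)]

section SlowFast

variable {f : ℝ → ℝ} {g : ℝ × ℝ × ℝ → ℝ}

theorem trace_slowFastJacobian (ε l : ℝ) :
    (slowFastJacobian f g ε l).trace = deriv f l + ε * fderiv ℝ g (l, f l, l) (0, 1, 0) :=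
  Matrix.trace_fin_two_of ..

theorem det_slowFastJacobian (ε l : ℝ) :
    (slowFastJacobian f g ε l).det =
      ε * (deriv f l * fderiv ℝ g (l, f l, l) (0, 1, 0) + fderiv ℝ g (l, f l, l) (1, 0, 0)) := by
  rw [slowFastJacobian, Matrix.det_fin_two_of]
  ring

theorem eventually_continuousAt_fderiv_apply_graph {x : ℝ} (hf : ContDiffAt ℝ 1 f x)
    (hg : ContDiffAt ℝ 1 g (x, f x, x)) (v : ℝ × ℝ × ℝ) :
    ∀ᶠ l in 𝓝 x, ContinuousAt (fun l ↦ fderiv ℝ g (l, f l, l) v) l := by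
  have hgraph : ∀ᶠ l in 𝓝 x, ContinuousAt (fun l ↦ (l, f l, l)) l :=
    (hf.eventually (by simp)).mono fun _ hl ↦
      continuousAt_id.prodMk (hl.continuousAt.prodMk continuousAt_id)
  filter_upwards [hgraph, hgraph.self_of_nhds.eventually (eventually_continuousAt_fderiv hg)]
    with l hl hgl
  exact (hgl.comp (f := fun l ↦ (l, f l, l)) hl).clm_apply continuousAt_const

theorem eventually_det_slowFastJacobian_pos {x : ℝ} (hf : ContDiffAt ℝ 1 f x)
    (hg : ContDiffAt ℝ 1 g (x, f x, x)) (hcrit : deriv f x = 0)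
    (hgx : 0 < fderiv ℝ g (x, f x, x) (1, 0, 0)) :
    ∀ᶠ l in 𝓝 x, ∀ ε > 0, 0 < (slowFastJacobian f g ε l).det := by
  have hcont : ContinuousAt (fun l ↦ deriv f l * fderiv ℝ g (l, f l, l) (0, 1, 0) +
      fderiv ℝ g (l, f l, l) (1, 0, 0)) x :=
    ((eventually_continuousAt_deriv hf).self_of_nhds.mul
      (eventually_continuousAt_fderiv_apply_graph hf hg _).self_of_nhds).add
      (eventually_continuousAt_fderiv_apply_graph hf hg _).self_of_nhds
  filter_upwards [hcont.eventually_const_lt (by simpa [hcrit] using hgx)] with l hl ε hε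
  rw [det_slowFastJacobian]
  exact mul_pos hε hl

theorem eventually_exists_trace_slowFastJacobian_eq_zero {x : ℝ} {U : Set ℝ}
    (hf : ContDiffAt ℝ 1 f x) (hg : ContDiffAt ℝ 1 g (x, f x, x)) (hcrit : deriv f x = 0)
    (hnondeg : deriv (deriv f) x < 0) (hU : U ∈ 𝓝 x) :
    ∀ᶠ ε in 𝓝 0, ∃ l ∈ U, (slowFastJacobian f g ε l).trace = 0 := by
  have hcont : ∀ᶠ l in 𝓝 x, ∀ ε : ℝ,
      ContinuousAt (fun l ↦ deriv f l + ε * fderiv ℝ g (l, f l, l) (0, 1, 0)) l := by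
    filter_upwards [eventually_continuousAt_deriv hf,
      eventually_continuousAt_fderiv_apply_graph hf hg (0, 1, 0)] with l hf' hgy ε
    exact hf'.add (hgy.const_mul ε)
  have hzero := eventually_exists_zero_of_tendsto_of_deriv_neg (p := 𝓝 0)
    (F := fun ε l ↦ deriv f l + ε * fderiv ℝ g (l, f l, l) (0, 1, 0))
    (inter_mem hU hcont) hcrit hnondeg
    (.of_forall fun ε _ hl ↦ (hl.2 ε).continuousWithinAt)
    fun _ _ ↦ Continuous.tendsto' (by fun_prop) _ _ (by simp)
  exact hzero.mono fun ε ⟨l, hl, htr⟩ ↦ ⟨l, hl.1, (trace_slowFastJacobian ε l).trans htr⟩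

theorem hopf_bifurcation_near_smooth_fold_general {x : ℝ} (hf : ContDiffAt ℝ 1 f x)
    (hg : ContDiffAt ℝ 1 g (x, f x, x)) (hcrit : deriv f x = 0)
    (hnondeg : deriv (deriv f) x < 0) (hgx : 0 < fderiv ℝ g (x, f x, x) (1, 0, 0)) :
    ∀ δ > 0, ∃ ε₀ > 0, ∀ ε ∈ Set.Ioo 0 ε₀, ∃ l, |l - x| < δ ∧
      (slowFastJacobian f g ε l).trace = 0 ∧ 0 < (slowFastJacobian f g ε l).det ∧
      ∃ ω : ℝ, ω ≠ 0 ∧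
        ((slowFastJacobian f g ε l).map Complex.ofReal).charpoly.IsRoot (Complex.I * ω) ∧
        ((slowFastJacobian f g ε l).map Complex.ofReal).charpoly.IsRoot (-(Complex.I * ω)) := by
  intro δ hδ
  have hU := inter_mem (Metric.ball_mem_nhds x hδ)
    (eventually_det_slowFastJacobian_pos hf hg hcrit hgx)
  have hzero := eventually_exists_trace_slowFastJacobian_eq_zero hf hg hcrit hnondeg hU
  obtain ⟨ε₀, hε₀, hsub⟩ :=
    mem_nhdsGT_iff_exists_Ioo_subset.1 (nhdsWithin_le_nhds (s := Set.Ioi 0) hzero)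
  refine ⟨ε₀, hε₀, fun ε hε ↦ ?_⟩
  obtain ⟨l, ⟨hlδ, hdet⟩, htr⟩ := hsub hε
  exact ⟨l, hlδ, htr, hdet ε hε.1,
    exists_isRoot_charpoly_I_mul (Fintype.card_fin 2) htr (hdet ε hε.1)⟩

end SlowFast

/-- Hopf bifurcation near the smooth fold.  If `f₊` (written `fp`) is `C³` with a
nondegenerate maximum at `x_M > 0` and `g_x(x_M, f₊(x_M), x_M) > 0`, then for every `δ > 0`
there is `ε₀ > 0` such that for all `ε ∈ (0, ε₀)` there exists `λ_H` with `|λ_H - x_M| < δ`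
at which the linearization `J = [[f₊'(λ_H), -1], [ε g_x, ε g_y]]` has zero trace and positive
determinant; in particular `J` has a pair of purely imaginary, nonzero complex eigenvalues. -/
theorem hopf_bifurcation_near_smooth_fold
    (fp : ℝ → ℝ) (g : ℝ × ℝ × ℝ → ℝ)
    (hfp : ContDiff ℝ 3 fp) (hg : ContDiff ℝ 1 g)
    (x_M : ℝ) (hxM : 0 < x_M)
    (hcrit : deriv fp x_M = 0) (hnondeg : deriv (deriv fp) x_M < 0)
    (hgx : 0 < fderiv ℝ g (x_M, fp x_M, x_M) (1, 0, 0)) :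
    ∀ δ > (0 : ℝ), ∃ ε₀ > (0 : ℝ), ∀ ε ∈ Set.Ioo (0 : ℝ) ε₀, ∃ lamH : ℝ,
      |lamH - x_M| < δ ∧
      -- trace(J) = f₊'(λ_H) + ε g_y = 0
      deriv fp lamH + ε * fderiv ℝ g (lamH, fp lamH, lamH) (0, 1, 0) = 0 ∧
      -- det(J) = ε (f₊'(λ_H) g_y + g_x) > 0
      0 < ε * (deriv fp lamH * fderiv ℝ g (lamH, fp lamH, lamH) (0, 1, 0)
               + fderiv ℝ g (lamH, fp lamH, lamH) (1, 0, 0)) ∧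
      -- J has a pair of purely imaginary, nonzero complex eigenvalues ± i ω
      ∃ ω : ℝ, ω ≠ 0 ∧
        (Matrix.charpoly ((!![deriv fp lamH, -1;
            ε * fderiv ℝ g (lamH, fp lamH, lamH) (1, 0, 0),
            ε * fderiv ℝ g (lamH, fp lamH, lamH) (0, 1, 0)]).map
          Complex.ofReal)).IsRoot (Complex.I * ω) ∧
        (Matrix.charpoly ((!![deriv fp lamH, -1;
            ε * fderiv ℝ g (lamH, fp lamH, lamH) (1, 0, 0),
            ε * fderiv ℝ g (lamH, fp lamH, lamH) (0, 1, 0)]).map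
          Complex.ofReal)).IsRoot (-(Complex.I * ω)) := by
  simpa only [↓trace_slowFastJacobian, ↓det_slowFastJacobian, slowFastJacobian] using
    hopf_bifurcation_near_smooth_fold_general (hfp.of_le (by norm_num)).contDiffAt hg.contDiffAt
      hcrit hnondeg hgx
end

section
/- Let f₋ : ℝ → ℝ be continuously differentiable with f₋(0) = 0 and f₋'(0) < 0, let g : ℝ³ → ℝ be continuously differentiable (arguments written g(x, y, λ)), and let ε > 0. Define h(λ) = f₋'(λ) + ε·g_y(λ, f₋(λ), λ). Suppose h(0) > 0 (i.e., α₋ = f₋'(0) + ε g_y(0,0,0) > 0), there exists λ⋆ < 0 with h(λ⋆) < 0, and g_x(λ, f₋(λ), λ) + f₋'(λ)·g_y(λ, f₋(λ), λ) > 0 for all λ ∈ [λ⋆, 0]. Then there exists λ₀ ∈ (λ⋆, 0) such that the matrix J = [[f₋'(λ₀), -1], [ε·g_x(λ₀, f₋(λ₀), λ₀), ε·g_y(λ₀, f₋(λ₀), λ₀)]] has trace zero and positive determinant; in particular J has a pair of purely imaginary nonzero complex eigenvalues, so the bifurcation at the corner for α₋ > 0 occurs as a smooth Hopf bifurcation at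 a negative parameter value λ₀ < 0. -/
/-! At a 2×2 matrix of trace zero the characteristic polynomial is `X² + det`, so a positive
determinant forces the eigenvalues `± i √det`. A continuous family of planar linearizations whose
determinant stays positive therefore meets the Hopf configuration as soon as its trace changes
sign. -/

open Set

theorem isRoot_charpoly_iff_sq_eq_neg_det_s11 {R : Type*} [CommRing R] [Nontrivial R]
    {A : Matrix (Fin 2) (Fin 2) R} (hA : A.trace = 0) {z : R} :
    A.charpoly.IsRoot z ↔ z ^ 2 = -A.det := by
  simp [Matrix.charpoly_fin_two, hA, eq_neg_iff_add_eq_zero]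

theorem isRoot_charpoly_map_iff_sq_eq_neg_det {R S : Type*} [CommRing R] [CommRing S]
    [Nontrivial S] (φ : R →+* S) {A : Matrix (Fin 2) (Fin 2) R} (hA : A.trace = 0) {z : S} :
    (A.map φ).charpoly.IsRoot z ↔ z ^ 2 = -φ A.det := by
  have trace_map : (A.map φ).trace = 0 := by
    rw [← AddMonoidHom.map_trace φ A, hA, map_zero]
  rw [isRoot_charpoly_iff_sq_eq_neg_det_s11 trace_map, φ.map_det, RingHom.mapMatrix_apply]

theorem exists_isRoot_charpoly_I_mul_s11 {A : Matrix (Fin 2) (Fin 2) ℝ} (htr : A.trace = 0)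
    (hdet : 0 < A.det) :
    ∃ ω : ℝ, ω ≠ 0 ∧ (A.map Complex.ofReal).charpoly.IsRoot (Complex.I * ω) ∧
      (A.map Complex.ofReal).charpoly.IsRoot (-(Complex.I * ω)) := by
  have I_mul_sqrt_sq : (Complex.I * (√A.det : ℝ)) ^ 2 = -(A.det : ℂ) := by
    rw [mul_pow, Complex.I_sq, ← Complex.ofReal_pow, Real.sq_sqrt hdet.le, neg_one_mul]
  have isRoot_iff {z : ℂ} : (A.map Complex.ofReal).charpoly.IsRoot z ↔ z ^ 2 = -(A.det : ℂ) :=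
    isRoot_charpoly_map_iff_sq_eq_neg_det Complex.ofRealHom htr
  exact ⟨√A.det, (Real.sqrt_pos.mpr hdet).ne', isRoot_iff.mpr I_mul_sqrt_sq,
    isRoot_iff.mpr ((neg_sq _).trans I_mul_sqrt_sq)⟩

theorem exists_hopf_of_trace_neg_of_trace_pos {α : Type*} [ConditionallyCompleteLinearOrder α]
    [TopologicalSpace α] [OrderTopology α] [DenselyOrdered α]
    {A : α → Matrix (Fin 2) (Fin 2) ℝ} {a b : α} (hab : a ≤ b)
    (hA : ContinuousOn (fun l ↦ (A l).trace) (Icc a b))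
    (ha : (A a).trace < 0) (hb : 0 < (A b).trace) (hdet : ∀ l ∈ Ioo a b, 0 < (A l).det) :
    ∃ l ∈ Ioo a b, (A l).trace = 0 ∧ 0 < (A l).det ∧
      ∃ ω : ℝ, ω ≠ 0 ∧ ((A l).map Complex.ofReal).charpoly.IsRoot (Complex.I * ω) ∧
        ((A l).map Complex.ofReal).charpoly.IsRoot (-(Complex.I * ω)) := by
  obtain ⟨l, hl, htr⟩ := intermediate_value_Ioo hab hA ⟨ha, hb⟩
  exact ⟨l, hl, htr, hdet l hl, exists_isRoot_charpoly_I_mul_s11 htr (hdet l hl)⟩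

/-- The linearization `[[f'(l), -1], [ε g_x, ε g_y]]` of the Liénard system `ẋ = -y + f(x)`,
`ẏ = ε g(x, y, l)` at the point `(l, f(l))`, for parameter value `l`. The partial derivatives of
`g` are the values of its Fréchet derivative on the standard basis vectors. -/
noncomputable def lienardLinearization (f : ℝ → ℝ) (g : ℝ × ℝ × ℝ → ℝ) (ε l : ℝ) :
    Matrix (Fin 2) (Fin 2) ℝ :=
  !![deriv f l, -1;
    ε * fderiv ℝ g (l, f l, l) (1, 0, 0), ε * fderiv ℝ g (l, f l, l) (0, 1, 0)]

section Linearization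

variable (f : ℝ → ℝ) (g : ℝ × ℝ × ℝ → ℝ) (ε l : ℝ)

theorem trace_lienardLinearization :
    (lienardLinearization f g ε l).trace =
      deriv f l + ε * fderiv ℝ g (l, f l, l) (0, 1, 0) :=
  Matrix.trace_fin_two_of _ _ _ _

theorem det_lienardLinearization :
    (lienardLinearization f g ε l).det =
      ε * (fderiv ℝ g (l, f l, l) (1, 0, 0)
        + deriv f l * fderiv ℝ g (l, f l, l) (0, 1, 0)) := by
  rw [lienardLinearization, Matrix.det_fin_two_of]
  ring

variable {f g ε}

theorem continuous_trace_lienardLinearization (hf : ContDiff ℝ 1 f) (hg : ContDiff ℝ 1 g) :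
    Continuous fun l ↦ (lienardLinearization f g ε l).trace := by
  simp only [trace_lienardLinearization]
  have fderiv_continuous : Continuous fun l ↦ fderiv ℝ g (l, f l, l) :=
    (hg.continuous_fderiv one_ne_zero).comp
      (continuous_id.prodMk (hf.continuous.prodMk continuous_id))
  exact hf.continuous_deriv_one.add
    (continuous_const.mul (fderiv_continuous.clm_apply continuous_const))

theorem corner_hopf_left_general (hf : ContDiff ℝ 1 f) (hg : ContDiff ℝ 1 g) {a b : ℝ}
    (hab : a ≤ b) (ha : (lienardLinearization f g ε a).trace < 0)
    (hb : 0 < (lienardLinearization f g ε b).trace)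
    (hdet : ∀ l ∈ Ioo a b, 0 < (lienardLinearization f g ε l).det) :
    ∃ l ∈ Ioo a b,
      (lienardLinearization f g ε l).trace = 0 ∧ 0 < (lienardLinearization f g ε l).det ∧
      ∃ ω : ℝ, ω ≠ 0 ∧
        ((lienardLinearization f g ε l).map Complex.ofReal).charpoly.IsRoot (Complex.I * ω) ∧
        ((lienardLinearization f g ε l).map Complex.ofReal).charpoly.IsRoot (-(Complex.I * ω)) :=
  exists_hopf_of_trace_neg_of_trace_pos hab
    (continuous_trace_lienardLinearization hf hg).continuousOn ha hb hdet

end Linearization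

/-- smooth Hopf bifurcation to the left of the corner when `α₋ > 0`.  With
`h(λ) = f₋'(λ) + ε g_y(λ, f₋(λ), λ)` (here `fm = f₋`), if `h(0) > 0`, `h(λ⋆) < 0` for some
`λ⋆ < 0`, and `g_x + f₋' g_y > 0` on `[λ⋆, 0]`, then there is `λ₀ ∈ (λ⋆, 0)` at which the
linearization `J = [[f₋'(λ₀), -1], [ε g_x, ε g_y]]` has zero trace and positive determinant;
in particular `J` has a pair of purely imaginary nonzero complex eigenvalues. -/
theorem corner_hopf_left
    (fm : ℝ → ℝ) (g : ℝ × ℝ × ℝ → ℝ)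
    (hfm : ContDiff ℝ 1 fm) (hg : ContDiff ℝ 1 g)
    (hfm0 : fm 0 = 0) (hfm'0 : deriv fm 0 < 0)
    (ε : ℝ) (hε : 0 < ε)
    (h : ℝ → ℝ)
    (hh : ∀ l, h l = deriv fm l + ε * fderiv ℝ g (l, fm l, l) (0, 1, 0))
    (hh0 : 0 < h 0)
    (lamS : ℝ) (hlamS : lamS < 0) (hhlamS : h lamS < 0)
    (hdet : ∀ l ∈ Set.Icc lamS (0 : ℝ),
      0 < fderiv ℝ g (l, fm l, l) (1, 0, 0)
          + deriv fm l * fderiv ℝ g (l, fm l, l) (0, 1, 0)) :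
    ∃ lam₀ ∈ Set.Ioo lamS (0 : ℝ),
      -- trace(J) = 0
      deriv fm lam₀ + ε * fderiv ℝ g (lam₀, fm lam₀, lam₀) (0, 1, 0) = 0 ∧
      -- det(J) = ε (g_x + f₋'(λ₀) g_y) > 0
      0 < ε * (fderiv ℝ g (lam₀, fm lam₀, lam₀) (1, 0, 0)
          + deriv fm lam₀ * fderiv ℝ g (lam₀, fm lam₀, lam₀) (0, 1, 0)) ∧
      -- J has a pair of purely imaginary nonzero complex eigenvalues ± i ω
      ∃ ω : ℝ, ω ≠ 0 ∧
        (Matrix.charpoly ((!![deriv fm lam₀, -1;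
            ε * fderiv ℝ g (lam₀, fm lam₀, lam₀) (1, 0, 0),
            ε * fderiv ℝ g (lam₀, fm lam₀, lam₀) (0, 1, 0)]).map
          Complex.ofReal)).IsRoot (Complex.I * ω) ∧
        (Matrix.charpoly ((!![deriv fm lam₀, -1;
            ε * fderiv ℝ g (lam₀, fm lam₀, lam₀) (1, 0, 0),
            ε * fderiv ℝ g (lam₀, fm lam₀, lam₀) (0, 1, 0)]).map
          Complex.ofReal)).IsRoot (-(Complex.I * ω)) := by
  simp only [hh, ← trace_lienardLinearization, ← det_lienardLinearization] at hh0 hhlamS ⊢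
  refine corner_hopf_left_general hfm hg hlamS.le hhlamS hh0 fun l hl ↦ ?_
  simpa only [det_lienardLinearization] using mul_pos hε (hdet l (Ioo_subset_Icc_self hl))
end

section
/- Let f₊ : ℝ → ℝ be continuously differentiable with f₊(0) = 0 and f₊'(0) > 0, let g : ℝ³ → ℝ be continuously differentiable (arguments written g(x, y, λ)), and let ε > 0. Define h(λ) = f₊'(λ) + ε·g_y(λ, f₊(λ), λ). Suppose h(0) < 0 (i.e., α₊ = f₊'(0) + ε g_y(0,0,0) < 0), there exists λ⋆ > 0 with h(λ⋆) > 0, and g_x(λ, f₊(λ), λ) + f₊'(λ)·g_y(λ, f₊(λ), λ) > 0 for all λ ∈ [0, λ⋆]. Then there exists λ₀ ∈ (0, λ⋆) such that the matrix J = [[f₊'(λ₀), -1], [ε·g_x(λ₀, f₊(λ₀), λ₀), ε·g_y(λ₀, f₊(λ₀), λ₀)]] has trace zero and positive determinant; in particular J has a pair of purely imaginary nonzero complex eigenvalues, so the bifurcation at the corner for α₊ < 0 occurs as a smooth Hopf bifurcation at a positive parameter value λ₀ > 0. -/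
/-!
Along the branch of equilibria the trace of the linearization changes sign, so it vanishes at some
interior parameter. A real `2 × 2` matrix with trace zero and determinant `d > 0` has
characteristic polynomial `X ^ 2 + d`, and hence the eigenvalues `± i √d`.
-/

theorem isRoot_charpoly_fin_two_iff_of_trace_eq_zero {R : Type*} [CommRing R] [Nontrivial R]
    {M : Matrix (Fin 2) (Fin 2) R} (htrace : M.trace = 0) {z : R} :
    M.charpoly.IsRoot z ↔ z ^ 2 = -M.det := by
  simp [M.charpoly_fin_two, htrace, Polynomial.IsRoot, eq_neg_iff_add_eq_zero]

theorem exists_imaginary_isRoot_charpoly_of_trace_eq_zero_of_det_pos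
    {A : Matrix (Fin 2) (Fin 2) ℝ} (htrace : A.trace = 0) (hdet : 0 < A.det) :
    ∃ ω : ℝ, ω ≠ 0 ∧
      (A.map Complex.ofReal).charpoly.IsRoot (Complex.I * ω) ∧
      (A.map Complex.ofReal).charpoly.IsRoot (-(Complex.I * ω)) := by
  have htraceC : (A.map Complex.ofReal).trace = 0 := by
    rw [← Complex.ofReal_zero, ← htrace]
    exact (AddMonoidHom.map_trace Complex.ofRealHom A).symm
  have hdetC : (A.map Complex.ofReal).det = A.det := (Complex.ofRealHom.map_det A).symm
  have hsq : (Complex.I * (√A.det : ℝ)) ^ 2 = -(A.map Complex.ofReal).det := by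
    rw [mul_pow, Complex.I_sq, ← Complex.ofReal_pow, Real.sq_sqrt hdet.le, hdetC, neg_one_mul]
  have hroot {z : ℂ} := isRoot_charpoly_fin_two_iff_of_trace_eq_zero htraceC (z := z)
  exact ⟨√A.det, (Real.sqrt_pos.2 hdet).ne', hroot.2 hsq, hroot.2 ((neg_sq _).trans hsq)⟩

section Lienard

/-- The linearization of the Liénard system `ẋ = -y + f x`, `ẏ = ε g(x, y, l)` at the point
`(l, f l)` of the critical manifold; the arguments of `g` are ordered `(x, y, l)`. -/
noncomputable def lienardJacobian (ε : ℝ) (f : ℝ → ℝ) (g : ℝ × ℝ × ℝ → ℝ) (l : ℝ) :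
    Matrix (Fin 2) (Fin 2) ℝ :=
  !![deriv f l, -1;
    ε * fderiv ℝ g (l, f l, l) (1, 0, 0), ε * fderiv ℝ g (l, f l, l) (0, 1, 0)]

variable {ε : ℝ} {f : ℝ → ℝ} {g : ℝ × ℝ × ℝ → ℝ}

theorem trace_lienardJacobian (l : ℝ) :
    (lienardJacobian ε f g l).trace = deriv f l + ε * fderiv ℝ g (l, f l, l) (0, 1, 0) :=
  Matrix.trace_fin_two_of _ _ _ _

theorem det_lienardJacobian (l : ℝ) :
    (lienardJacobian ε f g l).det =
      ε * (fderiv ℝ g (l, f l, l) (1, 0, 0)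
        + deriv f l * fderiv ℝ g (l, f l, l) (0, 1, 0)) := by
  rw [lienardJacobian, Matrix.det_fin_two_of]
  ring

theorem continuous_trace_lienardJacobian (hf : ContDiff ℝ 1 f) (hg : ContDiff ℝ 1 g) :
    Continuous fun l => (lienardJacobian ε f g l).trace := by
  have hderiv : Continuous (deriv f) := hf.continuous_deriv le_rfl
  have hbranch : Continuous fun l => (l, f l, l) :=
    continuous_id.prodMk (hf.continuous.prodMk continuous_id)
  have hfderiv : Continuous fun l => fderiv ℝ g (l, f l, l) :=
    (hg.continuous_fderiv one_ne_zero).comp hbranch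
  simp only [trace_lienardJacobian]
  exact hderiv.add (continuous_const.mul (hfderiv.clm_apply continuous_const))

theorem corner_hopf_right_general (hf : ContDiff ℝ 1 f) (hg : ContDiff ℝ 1 g)
    {a b : ℝ} (hab : a ≤ b)
    (ha : (lienardJacobian ε f g a).trace < 0) (hb : 0 < (lienardJacobian ε f g b).trace)
    (hdet : ∀ l ∈ Set.Ioo a b, 0 < (lienardJacobian ε f g l).det) :
    ∃ l ∈ Set.Ioo a b,
      (lienardJacobian ε f g l).trace = 0 ∧
      0 < (lienardJacobian ε f g l).det ∧
      ∃ ω : ℝ, ω ≠ 0 ∧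
        ((lienardJacobian ε f g l).map Complex.ofReal).charpoly.IsRoot (Complex.I * ω) ∧
        ((lienardJacobian ε f g l).map Complex.ofReal).charpoly.IsRoot (-(Complex.I * ω)) := by
  obtain ⟨l, hl, htrace⟩ :=
    intermediate_value_Ioo hab (continuous_trace_lienardJacobian hf hg).continuousOn ⟨ha, hb⟩
  exact ⟨l, hl, htrace, hdet l hl,
    exists_imaginary_isRoot_charpoly_of_trace_eq_zero_of_det_pos htrace (hdet l hl)⟩

end Lienard

/-- smooth Hopf bifurcation to the right of the corner when `α₊ < 0`.  With
`h(λ) = f₊'(λ) + ε g_y(λ, f₊(λ), λ)` (here `fp = f₊`), if `h(0) < 0`, `h(λ⋆) > 0` for some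
`λ⋆ > 0`, and `g_x + f₊' g_y > 0` on `[0, λ⋆]`, then there is `λ₀ ∈ (0, λ⋆)` at which the
linearization `J = [[f₊'(λ₀), -1], [ε g_x, ε g_y]]` has zero trace and positive determinant;
in particular `J` has a pair of purely imaginary nonzero complex eigenvalues. -/
theorem corner_hopf_right
    (fp : ℝ → ℝ) (g : ℝ × ℝ × ℝ → ℝ)
    (hfp : ContDiff ℝ 1 fp) (hg : ContDiff ℝ 1 g)
    (hfp0 : fp 0 = 0) (hfp'0 : 0 < deriv fp 0)
    (ε : ℝ) (hε : 0 < ε)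
    (h : ℝ → ℝ)
    (hh : ∀ l, h l = deriv fp l + ε * fderiv ℝ g (l, fp l, l) (0, 1, 0))
    (hh0 : h 0 < 0)
    (lamS : ℝ) (hlamS : 0 < lamS) (hhlamS : 0 < h lamS)
    (hdet : ∀ l ∈ Set.Icc (0 : ℝ) lamS,
      0 < fderiv ℝ g (l, fp l, l) (1, 0, 0)
          + deriv fp l * fderiv ℝ g (l, fp l, l) (0, 1, 0)) :
    ∃ lam₀ ∈ Set.Ioo (0 : ℝ) lamS,
      -- trace(J) = 0
      deriv fp lam₀ + ε * fderiv ℝ g (lam₀, fp lam₀, lam₀) (0, 1, 0) = 0 ∧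
      -- det(J) = ε (g_x + f₊'(λ₀) g_y) > 0
      0 < ε * (fderiv ℝ g (lam₀, fp lam₀, lam₀) (1, 0, 0)
          + deriv fp lam₀ * fderiv ℝ g (lam₀, fp lam₀, lam₀) (0, 1, 0)) ∧
      -- J has a pair of purely imaginary nonzero complex eigenvalues ± i ω
      ∃ ω : ℝ, ω ≠ 0 ∧
        (Matrix.charpoly ((!![deriv fp lam₀, -1;
            ε * fderiv ℝ g (lam₀, fp lam₀, lam₀) (1, 0, 0),
            ε * fderiv ℝ g (lam₀, fp lam₀, lam₀) (0, 1, 0)]).map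
          Complex.ofReal)).IsRoot (Complex.I * ω) ∧
        (Matrix.charpoly ((!![deriv fp lam₀, -1;
            ε * fderiv ℝ g (lam₀, fp lam₀, lam₀) (1, 0, 0),
            ε * fderiv ℝ g (lam₀, fp lam₀, lam₀) (0, 1, 0)]).map
          Complex.ofReal)).IsRoot (-(Complex.I * ω)) := by
  simp only [hh, ← trace_lienardJacobian] at hh0 hhlamS
  obtain ⟨l, hl, htrace, hdetpos, hroots⟩ :=
    corner_hopf_right_general hfp hg hlamS.le hh0 hhlamS fun l hl =>
      (mul_pos hε (hdet l (Set.Ioo_subset_Icc_self hl))).trans_eq (det_lienardJacobian l).symm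
  exact ⟨l, hl, trace_lienardJacobian l ▸ htrace, det_lienardJacobian l ▸ hdetpos, hroots⟩
end
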